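/- Let n ≥ 7. For 1 ≤ i ≤ n−1 define v_i = ∏_{j=1}^{i−1}(j, n+j) · (i, n+i+1)(i+1, n+i) · ∏_{j=i+2}^{n}(j, n+j) ∈ Sym_{2n}. Then there is no u_0 ∈ Sym_{2n} which is a product of n transpositions with pairwise disjoint supports, commutes with v_i for every 1 ≤ i ≤ n−1 with i ≠ 4, and satisfies the braid relation u_0 v_4 u_0 = v_4 u_0 v_4. In particular, for u_0 = ∏_{j=1}^{n}(j, n+j) one has u_0 v_4 u_0 = v_4 ≠ u_0 = v_4 u_0 v_4. -/

import Mathlib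

/-- The transposition `(j, n+j)` (0-based) in `Sym_{2n}`. -/
def tw (n : ℕ) (j : Fin n) : Equiv.Perm (Fin (2 * n)) :=
  Equiv.swap ⟨j, by have := j.isLt; omega⟩ ⟨n + j, by have := j.isLt; omega⟩

/-- The product `∏_{j < i} (j, n+j)` (0-based) in `Sym_{2n}`. -/
def lowTw (n : ℕ) (i : Fin (n - 1)) : Equiv.Perm (Fin (2 * n)) :=
  ((List.finRange n).map (fun j : Fin n => if (j : ℕ) < (i : ℕ) then tw n j else 1)).prod

/-- The product `∏_{j ≥ i+2} (j, n+j)` (0-based) in `Sym_{2n}`. -/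
def highTw (n : ℕ) (i : Fin (n - 1)) : Equiv.Perm (Fin (2 * n)) :=
  ((List.finRange n).map (fun j : Fin n => if (i : ℕ) + 2 ≤ (j : ℕ) then tw n j else 1)).prod

/-- `v_i = ρ_{L3}(σ_{i+1}) = ∏_{j<i}(j, n+j) · (i, n+i+1)(i+1, n+i) · ∏_{j≥i+2}(j, n+j)`
(0-based points) in `Sym_{2n}`, for `i : Fin (n-1)`. -/
def linL3Gen (n : ℕ) (i : Fin (n - 1)) : Equiv.Perm (Fin (2 * n)) :=
  lowTw n i *
    (Equiv.swap ⟨i, by have := i.isLt; omega⟩ ⟨n + i + 1, by have := i.isLt; omega⟩ *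
     Equiv.swap ⟨(i : ℕ) + 1, by have := i.isLt; omega⟩ ⟨n + i, by have := i.isLt; omega⟩) *
  highTw n i

/-- `u` is a product of `n` transpositions with pairwise disjoint supports. -/
def IsProdOfDisjointTranspositions (n : ℕ) (u : Equiv.Perm (Fin (2 * n))) : Prop :=
  ∃ a b : Fin n → Fin (2 * n),
    Function.Injective a ∧ Function.Injective b ∧ (∀ j k : Fin n, a j ≠ b k) ∧
    u = ((List.finRange n).map (fun j : Fin n => Equiv.swap (a j) (b j))).prod

def flipN (n x : ℕ) : ℕ := if x < n then n + x else x - n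

lemma swap_val {m : ℕ} (a b x : Fin m) :
    ((Equiv.swap a b x : Fin m) : ℕ) =
      if (x : ℕ) = a then (b : ℕ) else if (x : ℕ) = b then (a : ℕ) else x := by
  rw [Equiv.swap_apply_def]
  simp only [Fin.ext_iff]
  split_ifs <;> rfl

lemma tw_val (n : ℕ) (j : Fin n) (x : Fin (2 * n)) :
    ((tw n j x : Fin (2 * n)) : ℕ) =
      if (x : ℕ) = j ∨ (x : ℕ) = n + j then flipN n x else x := by
  have := j.isLt
  unfold tw flipN
  rw [swap_val]
  simp only
  split_ifs <;> omega

lemma prod_val (n : ℕ) (P : Fin n → Prop) [DecidablePred P] (l : List (Fin n)) (hl : l.Nodup)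
    (x : Fin (2 * n)) :
    ((∃ j ∈ l, P j ∧ ((x : ℕ) = j ∨ (x : ℕ) = n + j)) →
      (((l.map (fun j => if P j then tw n j else 1)).prod x : Fin (2 * n)) : ℕ) = flipN n x) ∧
    ((¬ ∃ j ∈ l, P j ∧ ((x : ℕ) = j ∨ (x : ℕ) = n + j)) →
      (((l.map (fun j => if P j then tw n j else 1)).prod x : Fin (2 * n)) : ℕ) = x) := by
  induction l with
  | nil => simp
  | cons a l ih =>
    rw [List.nodup_cons] at hl
    obtain ⟨ha, hl⟩ := hl
    obtain ⟨h1, h2⟩ := ih hl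
    simp only [List.map_cons, List.prod_cons, Equiv.Perm.mul_apply]
    set y := (l.map (fun j => if P j then tw n j else 1)).prod x with hy
    have hstep : (((if P a then tw n a else 1 : Equiv.Perm (Fin (2 * n))) y : Fin (2 * n)) : ℕ) =
        if P a ∧ ((y : ℕ) = a ∨ (y : ℕ) = n + a) then flipN n y else y := by
      by_cases hP : P a
      · simp only [hP, if_true, true_and]; exact tw_val n a y
      · simp [hP]
    rw [hstep]
    have haL := a.isLt
    by_cases hx : ∃ j ∈ l, P j ∧ ((x : ℕ) = j ∨ (x : ℕ) = n + j)
    · have hyx := h1 hx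
      obtain ⟨j, hj, hPj, hxj⟩ := hx
      have hja : (j : ℕ) ≠ a := fun h => ha (Fin.ext h ▸ hj)
      have hjL := j.isLt
      have hn : ¬ ((y : ℕ) = a ∨ (y : ℕ) = n + a) := by
        rw [hyx]; unfold flipN; split_ifs <;> omega
      rw [if_neg (fun h => hn h.2)]
      refine ⟨fun _ => hyx, fun h => absurd ⟨j, List.mem_cons_of_mem _ hj, hPj, hxj⟩ h⟩
    · have hyx := h2 hx
      rw [hyx]
      constructor
      · rintro ⟨j, hj, hPj, hxj⟩
        rcases List.mem_cons.1 hj with rfl | hj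
        · rw [if_pos ⟨hPj, hxj⟩]
        · exact absurd ⟨j, hj, hPj, hxj⟩ hx
      · intro h
        rw [if_neg (fun hh => h ⟨a, List.mem_cons_self, hh.1, hh.2⟩)]

lemma prod_val' (n : ℕ) (Q : ℕ → Prop) [DecidablePred Q] (x : Fin (2 * n)) :
    ((((List.finRange n).map (fun j : Fin n => if Q j then tw n j else 1)).prod x
      : Fin (2 * n)) : ℕ) =
      if Q (if (x : ℕ) < n then x else x - n) then flipN n x else x := by
  have h := prod_val n (fun j => Q j) (List.finRange n) (List.nodup_finRange n) x
  have hx := x.isLt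
  split_ifs with h1 h2 h2
  · exact h.1 ⟨⟨x, h1⟩, List.mem_finRange _, h2, Or.inl rfl⟩
  · refine h.2 ?_
    rintro ⟨j, -, hj, hxj⟩
    have := j.isLt
    have e : (x : ℕ) = j := by omega
    exact h2 (e ▸ hj)
  · exact h.1 ⟨⟨x - n, by omega⟩, List.mem_finRange _, h2, Or.inr (by simp only; omega)⟩
  · refine h.2 ?_
    rintro ⟨j, -, hj, hxj⟩
    have := j.isLt
    have e : (x : ℕ) - n = j := by omega
    exact h2 (e ▸ hj)

lemma all_val (n : ℕ) (x : Fin (2 * n)) :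
    ((((List.finRange n).map (tw n)).prod x : Fin (2 * n)) : ℕ) = flipN n x := by
  have h := prod_val' n (fun _ => True) x
  simpa using h

def vN (n i x : ℕ) : ℕ :=
  if x = i then n + i + 1 else if x = i + 1 then n + i else
  if x = n + i then i + 1 else if x = n + i + 1 then i else
  if x < n then n + x else x - n

lemma gen_val (n : ℕ) (i : Fin (n - 1)) (x : Fin (2 * n)) :
    ((linL3Gen n i x : Fin (2 * n)) : ℕ) = vN n i x := by
  have hi := i.isLt
  have hx := x.isLt
  unfold linL3Gen lowTw highTw
  simp only [Equiv.Perm.mul_apply]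
  rw [prod_val' n (fun j => j < (i : ℕ)), swap_val, swap_val,
    prod_val' n (fun j => (i : ℕ) + 2 ≤ j)]
  simp only
  generalize (i : ℕ) = k at *
  generalize (x : ℕ) = y at *
  generalize hz : (if k + 2 ≤ (if y < n then y else y - n) then flipN n y else y) = z
  have hz' : (z = flipN n y ∧ (k + 2 ≤ y ∧ y < n ∨ n + k + 2 ≤ y)) ∨
      (z = y ∧ (y < k + 2 ∨ n ≤ y ∧ y < n + k + 2)) := by
    split_ifs at hz <;> omega
  clear hz
  generalize hw : (if z = k + 1 then n + k else if z = n + k then k + 1 else z) = w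
  generalize hw2 : (if w = k then n + k + 1 else if w = n + k + 1 then k else w) = w'
  unfold flipN at hz' ⊢
  rcases hz' with ⟨h1, h2⟩ | ⟨h1, h2⟩
  · have e1 : w = z := by split_ifs at h1 <;> split_ifs at hw <;> omega
    subst e1
    have e2 : w' = w := by split_ifs at h1 <;> split_ifs at hw2 <;> omega
    subst e2
    clear hw hw2
    unfold vN
    split_ifs at h1 <;> split_ifs <;> omega
  · subst h1
    unfold vN
    split_ifs at hw <;> split_ifs at hw2 <;> split_ifs <;> omega

lemma fix_iff {α : Type*} (u p q : Equiv.Perm α) (hp : Commute u p) (hq : Commute u q) (x : α) :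
    p (q (u x)) = u x ↔ p (q x) = x := by
  have h : ∀ y, p (u y) = u (p y) := fun y => (Equiv.Perm.congr_fun hp.eq y).symm
  have h' : ∀ y, q (u y) = u (q y) := fun y => (Equiv.Perm.congr_fun hq.eq y).symm
  rw [h', h, u.injective.eq_iff]

lemma comp01 (n y : ℕ) (hn : 7 ≤ n) (hy : y < 2 * n) :
    vN n 0 (vN n 1 y) = y ↔ ¬ ((0 ≤ y ∧ y ≤ 2) ∨ (n + 0 ≤ y ∧ y ≤ n + 2)) := by
  generalize hz : vN n 1 y = z
  unfold vN at hz ⊢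
  split_ifs at hz <;> split_ifs <;> omega

lemma comp12 (n y : ℕ) (hn : 7 ≤ n) (hy : y < 2 * n) :
    vN n 1 (vN n 2 y) = y ↔ ¬ ((1 ≤ y ∧ y ≤ 3) ∨ (n + 1 ≤ y ∧ y ≤ n + 3)) := by
  generalize hz : vN n 2 y = z
  unfold vN at hz ⊢
  split_ifs at hz <;> split_ifs <;> omega

lemma comp45 (n y : ℕ) (hn : 7 ≤ n) (hy : y < 2 * n) :
    vN n 4 (vN n 5 y) = y ↔ ¬ ((4 ≤ y ∧ y ≤ 6) ∨ (n + 4 ≤ y ∧ y ≤ n + 6)) := by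
  generalize hz : vN n 5 y = z
  unfold vN at hz ⊢
  split_ifs at hz <;> split_ifs <;> omega

lemma comp50 (n y : ℕ) (hn : 7 ≤ n) (hy : y < 2 * n) :
    vN n 5 (vN n 0 y) = y ↔ ¬ ((5 ≤ y ∧ y ≤ 6) ∨ (n + 5 ≤ y ∧ y ≤ n + 6) ∨ (0 ≤ y ∧ y ≤ 1) ∨ (n + 0 ≤ y ∧ y ≤ n + 1)) := by
  generalize hz : vN n 0 y = z
  unfold vN at hz ⊢
  split_ifs at hz <;> split_ifs <;> omega

lemma col3 (n y : ℕ) (hn : 7 ≤ n) (hy : y < 2 * n) :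
    (vN n 0 (vN n 1 y) = y ∧ vN n 1 (vN n 2 y) ≠ y) ↔ (y = 3 ∨ y = n + 3) := by
  rw [Ne, comp01 n y hn hy, comp12 n y hn hy]; omega

lemma col4 (n y : ℕ) (hn : 7 ≤ n) (hy : y < 2 * n) :
    (vN n 5 (vN n 0 y) = y ∧ vN n 4 (vN n 5 y) ≠ y) ↔ (y = 4 ∨ y = n + 4) := by
  rw [Ne, comp50 n y hn hy, comp45 n y hn hy]; omega

/-- Case 6 of the proof of Theorem 1. Let `n ≥ 7` and let
`v_i = ρ_{L3}(σ_i)`, `1 ≤ i ≤ n-1` (the generator of 1-based index `i` is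
`linL3Gen n ⟨i-1, _⟩`; in particular `v_4 = linL3Gen n ⟨3, _⟩`). There is no
`u₀ ∈ Sym_{2n}` which is a product of `n` transpositions with pairwise disjoint
supports, commutes with `v_i` for every `1 ≤ i ≤ n-1` with `i ≠ 4`, and satisfies the
braid relation `u₀ v₄ u₀ = v₄ u₀ v₄`. In particular, for `u₀ = ∏_{j=1}^{n}(j, n+j)` one
has `u₀ v₄ u₀ = v₄ ≠ u₀ = v₄ u₀ v₄`. -/
theorem case6_no_u0 (n : ℕ) (hn : 7 ≤ n) :
    (¬ ∃ u0 : Equiv.Perm (Fin (2 * n)),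
      IsProdOfDisjointTranspositions n u0 ∧
      (∀ i : Fin (n - 1), (i : ℕ) ≠ 3 → Commute u0 (linL3Gen n i)) ∧
      u0 * linL3Gen n ⟨3, by omega⟩ * u0 =
        linL3Gen n ⟨3, by omega⟩ * u0 * linL3Gen n ⟨3, by omega⟩) ∧
    ((List.finRange n).map (tw n)).prod * linL3Gen n ⟨3, by omega⟩ *
        ((List.finRange n).map (tw n)).prod = linL3Gen n ⟨3, by omega⟩ ∧
    linL3Gen n ⟨3, by omega⟩ * ((List.finRange n).map (tw n)).prod *
        linL3Gen n ⟨3, by omega⟩ = ((List.finRange n).map (tw n)).prod ∧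
    linL3Gen n ⟨3, by omega⟩ ≠ ((List.finRange n).map (tw n)).prod := by
  refine ⟨?_, ?_, ?_, ?_⟩
  · rintro ⟨u, -, hc, hb⟩
    have key : ∀ (i j : ℕ) (hi : i < n - 1) (hj : j < n - 1), i ≠ 3 → j ≠ 3 → ∀ x : Fin (2 * n),
        (vN n i (vN n j (u x : Fin (2 * n))) = (u x : Fin (2 * n)) ↔ vN n i (vN n j x) = x) := by
      intro i j hi hj h3 h3' x
      have h := fix_iff u _ _ (hc ⟨i, hi⟩ h3) (hc ⟨j, hj⟩ h3') x
      simpa only [Fin.ext_iff, gen_val] using h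
    have h3 : ∀ x : Fin (2 * n), ((x : ℕ) = 3 ∨ (x : ℕ) = n + 3) →
        (((u x : Fin (2 * n)) : ℕ) = 3 ∨ ((u x : Fin (2 * n)) : ℕ) = n + 3) := by
      intro x hx
      rw [← col3 n _ hn (Fin.isLt _)] at hx ⊢
      rw [Ne, key 0 1 (by omega) (by omega) (by omega) (by omega),
        key 1 2 (by omega) (by omega) (by omega) (by omega)]
      exact hx
    have h4 : ∀ x : Fin (2 * n), ((x : ℕ) = 4 ∨ (x : ℕ) = n + 4) →
        (((u x : Fin (2 * n)) : ℕ) = 4 ∨ ((u x : Fin (2 * n)) : ℕ) = n + 4) := by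
      intro x hx
      rw [← col4 n _ hn (Fin.isLt _)] at hx ⊢
      rw [Ne, key 5 0 (by omega) (by omega) (by omega) (by omega),
        key 4 5 (by omega) (by omega) (by omega) (by omega)]
      exact hx
    have v34 : ∀ x : Fin (2 * n), ((x : ℕ) = 3 ∨ (x : ℕ) = n + 3) →
        (((linL3Gen n ⟨3, by omega⟩ x : Fin (2 * n)) : ℕ) = 4 ∨
          ((linL3Gen n ⟨3, by omega⟩ x : Fin (2 * n)) : ℕ) = n + 4) := by
      intro x hx
      rw [gen_val]; simp only; unfold vN; split_ifs <;> omega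
    have v43 : ∀ x : Fin (2 * n), ((x : ℕ) = 4 ∨ (x : ℕ) = n + 4) →
        (((linL3Gen n ⟨3, by omega⟩ x : Fin (2 * n)) : ℕ) = 3 ∨
          ((linL3Gen n ⟨3, by omega⟩ x : Fin (2 * n)) : ℕ) = n + 3) := by
      intro x hx
      rw [gen_val]; simp only; unfold vN; split_ifs <;> omega
    have e := Equiv.Perm.congr_fun hb ⟨3, by omega⟩
    simp only [Equiv.Perm.mul_apply] at e
    have a := h4 _ (v34 _ (h3 ⟨3, by omega⟩ (Or.inl rfl)))
    have b := v43 _ (h4 _ (v34 ⟨3, by omega⟩ (Or.inl rfl)))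
    rw [e] at a
    omega
  · ext x
    have hx := x.isLt
    simp only [Equiv.Perm.mul_apply, gen_val, all_val]
    generalize (x : ℕ) = y at *
    generalize h1 : flipN n y = z
    generalize h2 : vN n 3 z = w
    unfold vN flipN at *
    split_ifs at h1 <;> split_ifs at h2 <;> split_ifs <;> omega
  · ext x
    have hx := x.isLt
    simp only [Equiv.Perm.mul_apply, gen_val, all_val]
    generalize (x : ℕ) = y at *
    generalize h1 : vN n 3 y = z
    generalize h2 : flipN n z = w
    unfold vN flipN at *
    split_ifs at h1 <;> split_ifs at h2 <;> split_ifs <;> omega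
  · intro h
    have e := congrArg Fin.val (Equiv.Perm.congr_fun h ⟨3, by omega⟩)
    rw [gen_val, all_val] at e
    simp only [vN, flipN] at e
    split_ifs at e <;> omega
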